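/- For every positive integer w, there exists a subset S of the set of irreducible complex characters of S_{2w}, of cardinality p(2w) − p(w) (where p denotes the partition-counting function), such that the set {Ind_{S_w × S_w}^{S_{2w}}(χ ⊠ χ) : χ ∈ Irr(S_w)} ∪ S is a ℤ-basis of the group ℤIrr(S_{2w}) of virtual characters of S_{2w}. -/

import Mathlib

open scoped Classical

/-- `f : G → ℂ` is an irreducible complex character of `G`. -/
def IsIrrChar (G : Type) [Group G] (f : G → ℂ) : Prop :=
  ∃ V : FDRep ℂ G, CategoryTheory.Simple V ∧ FDRep.character V = f

/-- Induction of a class function `u` on `H` along a (typically injective) group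
homomorphism `φ : H →* G`; for the inclusion of a subgroup this is the usual induced class
function `Ind_H^G u (g) = |H|⁻¹ ∑_{x ∈ G, x⁻¹gx ∈ H} u (x⁻¹gx)`. -/
noncomputable def indHom {H G : Type*} [Group H] [Fintype H] [Group G] [Fintype G]
    (φ : H →* G) (u : H → ℂ) : G → ℂ :=
  fun g => (Nat.card H : ℂ)⁻¹ *
    ∑ x : G, ∑ h : H, if φ h = x⁻¹ * g * x then u h else 0

/-- The set of characters `Ind_{S_w × S_w}^{S_{2w}} (χ ⊠ χ)` for `χ ∈ Irr(S_w)`. -/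
noncomputable def gammaSet (w : ℕ) : Set (Equiv.Perm (Fin w ⊕ Fin w) → ℂ) :=
  (fun χ : Equiv.Perm (Fin w) → ℂ =>
    indHom (Equiv.Perm.sumCongrHom (Fin w) (Fin w)) (fun p => χ p.1 * χ p.2)) ''
      {f | IsIrrChar (Equiv.Perm (Fin w)) f}

/-!
Every irreducible representation of the symmetric group on `Ω` is realized inside the space of
functions on `Perm Ω` with the right translation action, as the Specht module generated by a Young
symmetrizer. The key fact is that a nonzero function that is invariant under the row stabilizer of a
tableau of shape `ν` and alternating under the column stabilizer of a tableau of shape `μ` forces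
`μ = ν` or `n(μ) < n(ν)`, where `n` is the sum of the row indices of the cells; for one and the same
tableau such a function is a multiple of the symmetrizer. Both representations `χ^μ ⊠ χ^μ` and
`χ^(2μ)` are generated by a vector that the column stabilizer of a tableau of shape `2μ` multiplies
by the sign, so by Frobenius reciprocity `Ind (χ^μ ⊠ χ^μ)` contains `χ^(2μ)` exactly once, and its
other constituents `χ^ν` satisfy `n(2μ) < n(ν)`. Thus replacing each `χ^(2μ)` by `Ind (χ^μ ⊠ χ^μ)`
is a unitriangular change of basis, and `S` consists of the characters labelled by the diagrams
with at least one row of odd length.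
-/

open Equiv Module Representation Submodule TensorProduct
open TannakaDuality.FiniteGroup (rightRegular rightRegular_apply)

section Unitriangular

variable {R M ι α : Type*} [Ring R] [AddCommGroup M] [Module R M] [Finite ι] [Preorder α]
  {χ b : ι → M} {r : ι → α}

lemma span_range_eq_of_unitriangular (h : ∀ i, b i - χ i ∈ span R (χ '' {j | r i < r j})) :
    span R (Set.range b) = span R (Set.range χ) := by
  apply le_antisymm <;> rw [span_le, Set.range_subset_iff] <;> intro i
  · rw [← sub_add_cancel (b i) (χ i)]
    exact add_mem (span_mono (Set.image_subset_range _ _) (h i)) (subset_span ⟨i, rfl⟩)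
  · let := Preorder.lift r
    induction i using WellFoundedGT.induction with
    | ind i ih =>
      rw [← sub_sub_cancel (b i) (χ i)]
      refine sub_mem (subset_span ⟨i, rfl⟩) (span_le.2 ?_ (h i))
      rintro _ ⟨j, hj, rfl⟩
      exact ih j hj

lemma linearIndependent_of_unitriangular [OrzechProperty R] (hχ : LinearIndependent R χ)
    (h : ∀ i, b i - χ i ∈ span R (χ '' {j | r i < r j})) : LinearIndependent R b := by
  nontriviality R
  have := Fintype.ofFinite ι
  rw [linearIndependent_iff_card_eq_finrank_span] at hχ ⊢
  rw [hχ, Set.finrank, Set.finrank, span_range_eq_of_unitriangular h]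

end Unitriangular

section Characters

/-- The scalar product of characters, as the bilinear form `|G|⁻¹ ∑ x, f x * g x⁻¹`. It agrees with
the Hermitian product on characters because these satisfy `χ x⁻¹ = conj (χ x)`. -/
noncomputable def charPairing (G : Type*) [Group G] [Fintype G] : LinearMap.BilinForm ℂ (G → ℂ) :=
  (Nat.card G : ℂ)⁻¹ •
    ∑ x : G, (LinearMap.mul ℂ ℂ).compl₁₂ (LinearMap.proj x) (LinearMap.proj x⁻¹)

/-- The space of complex class functions on `G`, that is, of functions of the conjugacy class. -/
def classFunctions (G : Type*) [Group G] : Submodule ℂ (G → ℂ) :=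
  LinearMap.range (LinearMap.funLeft ℂ ℂ (ConjClasses.mk : G → ConjClasses G))

lemma mem_classFunctions {G : Type*} [Group G] {f : G → ℂ} :
    f ∈ classFunctions G ↔ ∀ g h, f (h * g * h⁻¹) = f g := by
  constructor
  · rintro ⟨u, rfl⟩ g h
    exact congr_arg u (ConjClasses.mk_eq_mk_iff_isConj.2 (isConj_iff.2 ⟨h, rfl⟩).symm)
  · refine fun hf => ⟨Quotient.lift f fun a b hab => ?_, rfl⟩
    obtain ⟨c, rfl⟩ := isConj_iff.1 hab
    exact (hf a c).symm

lemma finrank_classFunctions (G : Type*) [Group G] [Finite G] :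
    finrank ℂ (classFunctions G) = Nat.card (ConjClasses G) := by
  have := Fintype.ofFinite (ConjClasses G)
  rw [classFunctions, LinearMap.finrank_range_of_inj
    (LinearMap.funLeft_injective_of_surjective _ _ _ ConjClasses.mk_surjective),
    finrank_fintype_fun_eq_card, Nat.card_eq_fintype_card]

lemma IsIrrChar.mem_classFunctions {G : Type} [Group G] {f : G → ℂ} (hf : IsIrrChar G f) :
    f ∈ classFunctions G := by
  obtain ⟨V, -, rfl⟩ := hf
  exact _root_.mem_classFunctions.2 V.char_conj

section

variable {G : Type*} [Group G] [Fintype G]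

lemma charPairing_apply (f g : G → ℂ) :
    charPairing G f g = (Nat.card G : ℂ)⁻¹ * ∑ x, f x * g x⁻¹ := by
  simp [charPairing, LinearMap.sum_apply]

lemma charPairing_comm (f g : G → ℂ) : charPairing G f g = charPairing G g f := by
  rw [charPairing_apply, charPairing_apply, ← Equiv.sum_comp (Equiv.inv G)]
  simp [mul_comm]

lemma charPairing_character {V W : Type*} [AddCommGroup V] [Module ℂ V] [FiniteDimensional ℂ V]
    [AddCommGroup W] [Module ℂ W] [FiniteDimensional ℂ W]
    (ρ : Representation ℂ G V) (σ : Representation ℂ G W) :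
    charPairing G σ.character ρ.character = finrank ℂ (IntertwiningMap ρ σ) := by
  have := invertibleOfNonzero (NeZero.ne (Nat.card G : ℂ))
  rw [charPairing_apply, card_inv_mul_sum_char_mul_char_eq_finrank]

end

variable {G : Type} [Group G]

lemma isIrrChar_character [Finite G] {V : Type} [AddCommGroup V] [Module ℂ V]
    [FiniteDimensional ℂ V] {ρ : Representation ℂ G V} (h : finrank ℂ (IntertwiningMap ρ ρ) = 1) :
    IsIrrChar G ρ.character := by
  have := Fintype.ofFinite G
  refine ⟨FDRep.of ρ, ?_, rfl⟩
  have h1 := charPairing_character ρ ρ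
  rw [h, Nat.cast_one, charPairing_apply, inv_mul_eq_iff_eq_mul₀ (NeZero.ne _), mul_one] at h1
  exact (FDRep.simple_iff_char_is_norm_one _).2 h1

lemma IsIrrChar.charPairing_self [Fintype G] {f : G → ℂ} (hf : IsIrrChar G f) :
    charPairing G f f = 1 := by
  obtain ⟨V, hV, rfl⟩ := hf
  have := invertibleOfNonzero (NeZero.ne (Nat.card G : ℂ))
  have h1 := FDRep.char_orthonormal V V
  rw [if_pos ⟨CategoryTheory.Iso.refl V⟩] at h1
  rwa [charPairing_apply]

lemma IsIrrChar.charPairing_eq_zero [Fintype G] {f g : G → ℂ} (hf : IsIrrChar G f)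
    (hg : IsIrrChar G g) (hne : f ≠ g) : charPairing G f g = 0 := by
  obtain ⟨V, hV, rfl⟩ := hf
  obtain ⟨W, hW, rfl⟩ := hg
  have := invertibleOfNonzero (NeZero.ne (Nat.card G : ℂ))
  have h1 := FDRep.char_orthonormal V W
  rw [if_neg fun ⟨i⟩ => hne (FDRep.char_iso i)] at h1
  rwa [charPairing_apply]

section Family

variable {ι : Type*} {χ : ι → G → ℂ} (hχ : ∀ i, IsIrrChar G (χ i)) (hinj : Function.Injective χ)

include hχ hinj

lemma isOrtho_of_isIrrChar [Fintype G] : (charPairing G).IsOrthoᵢ χ :=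
  LinearMap.isOrthoᵢ_def.2 fun _ _ hij => (hχ _).charPairing_eq_zero (hχ _) (hinj.ne hij)

lemma eq_sum_charPairing_smul [Fintype G] [Fintype ι] {f : G → ℂ} (hf : f ∈ span ℂ (Set.range χ)) :
    f = ∑ i, charPairing G f (χ i) • χ i := by
  obtain ⟨a, rfl⟩ := (mem_span_range_iff_exists_fun ℂ).1 hf
  refine Finset.sum_congr rfl fun i _ => congr_arg (· • χ i) ?_
  rw [map_sum, LinearMap.sum_apply, Finset.sum_eq_single i, map_smul, LinearMap.smul_apply,
    (hχ i).charPairing_self, smul_eq_mul, mul_one]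
  · intro j _ hj
    rw [map_smul, LinearMap.smul_apply, (hχ j).charPairing_eq_zero (hχ i) (hinj.ne hj), smul_zero]
  · simp

variable [Finite G]

lemma linearIndependent_of_isIrrChar : LinearIndependent ℂ χ :=
  have := Fintype.ofFinite G
  LinearMap.linearIndependent_of_isOrthoᵢ (isOrtho_of_isIrrChar hχ hinj) fun i h =>
    one_ne_zero ((hχ i).charPairing_self.symm.trans h)

variable [Finite ι] (hcard : Nat.card (ConjClasses G) ≤ Nat.card ι)

include hcard

lemma span_range_eq_classFunctions : span ℂ (Set.range χ) = classFunctions G := by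
  have := Fintype.ofFinite ι
  refine eq_of_le_of_finrank_le ?_ ?_
  · rw [span_le, Set.range_subset_iff]
    exact fun i => (hχ i).mem_classFunctions
  · rwa [finrank_classFunctions, finrank_span_eq_card (linearIndependent_of_isIrrChar hχ hinj),
      ← Nat.card_eq_fintype_card]

lemma range_eq_setOf_isIrrChar : Set.range χ = {f | IsIrrChar G f} := by
  have := Fintype.ofFinite ι
  have := Fintype.ofFinite G
  refine Set.Subset.antisymm (Set.range_subset_iff.2 hχ) fun f hf => ?_
  by_contra hne
  have h0 (i : ι) : charPairing G f (χ i) = 0 :=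
    hf.charPairing_eq_zero (hχ i) fun h => hne ⟨i, h.symm⟩
  have hf0 : f = 0 := by
    rw [eq_sum_charPairing_smul hχ hinj (f := f)]
    · simp [h0]
    · rw [span_range_eq_classFunctions hχ hinj hcard]
      exact hf.mem_classFunctions
  simpa [hf0] using hf.charPairing_self

end Family

end Characters

section Frobenius

variable {G H : Type*} [Group G] [Fintype G] [Group H] [Fintype H]

lemma indHom_mem_classFunctions (φ : H →* G) (u : H → ℂ) : indHom φ u ∈ classFunctions G := by
  refine mem_classFunctions.2 fun g k => ?_
  rw [indHom, indHom, ← Equiv.sum_comp (Equiv.mulLeft k)]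
  simp [mul_assoc]

lemma charPairing_indHom (φ : H →* G) (u : H → ℂ) {f : G → ℂ} (hf : f ∈ classFunctions G) :
    charPairing G (indHom φ u) f = charPairing H u (f ∘ φ) := by
  rw [mem_classFunctions] at hf
  have hconj (x : G) (h : H) :
      ∑ g, (if φ h = x⁻¹ * g * x then u h else 0) * f g⁻¹ = u h * f (φ h⁻¹) := by
    rw [Finset.sum_eq_single (x * φ h * x⁻¹), if_pos (by group),
      show (x * φ h * x⁻¹)⁻¹ = x * φ h⁻¹ * x⁻¹ by simp [mul_assoc], hf]
    · intro g _ hg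
      rw [if_neg fun h' => hg (by rw [h']; group), zero_mul]
    · simp
  calc charPairing G (indHom φ u) f
    _ = (Nat.card G : ℂ)⁻¹ * ((Nat.card H : ℂ)⁻¹ *
          ∑ x, ∑ h, ∑ g, (if φ h = x⁻¹ * g * x then u h else 0) * f g⁻¹) := by
      simp only [charPairing_apply, indHom, mul_assoc, Finset.sum_mul, ← Finset.mul_sum]
      rw [Finset.sum_comm]
      simp only [Finset.sum_comm (s := (Finset.univ : Finset G)) (t := (Finset.univ : Finset H))]
    _ = charPairing H u (f ∘ φ) := by
      simp only [hconj, Finset.sum_const, Finset.card_univ, nsmul_eq_mul, charPairing_apply,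
        Function.comp_apply]
      rw [mul_left_comm, Nat.card_eq_fintype_card (α := G), inv_mul_cancel_left₀ (by simp)]

end Frobenius

lemma exists_comp_comp_eq_self {R M N : Type*} [Ring R] [AddCommGroup M] [Module R M]
    [AddCommGroup N] [Module R N] [IsSemisimpleModule R M] [IsSemisimpleModule R N]
    (f : M →ₗ[R] N) : ∃ g : N →ₗ[R] M, f ∘ₗ g ∘ₗ f = f := by
  obtain ⟨s, hs⟩ := IsSemisimpleModule.lifting_property f.rangeRestrict f.surjective_rangeRestrict
    LinearMap.id
  obtain ⟨g, hg⟩ := IsSemisimpleModule.extension_property (LinearMap.range f).subtype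
    (LinearMap.range f).injective_subtype s
  refine ⟨g, LinearMap.ext fun x => ?_⟩
  have hgs : g (f x) = s (f.rangeRestrict x) := LinearMap.congr_fun hg (f.rangeRestrict x)
  have hfs : f.rangeRestrict (s (f.rangeRestrict x)) = f.rangeRestrict x :=
    LinearMap.congr_fun hs (f.rangeRestrict x)
  rw [LinearMap.comp_apply, LinearMap.comp_apply, hgs]
  exact congr_arg Subtype.val hfs

section CyclicRepresentations

section Monoid

variable {k G V W : Type*} [CommSemiring k] [Monoid G] [AddCommMonoid V] [Module k V]
  [AddCommMonoid W] [Module k W]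

/-- The subrepresentation generated by a vector. -/
def cyclicSubrep (ρ : Representation k G V) (v : V) : Subrepresentation ρ where
  toSubmodule := span k (Set.range fun g => ρ g v)
  apply_mem_toSubmodule g := (span_le (p := (span k _).comap (ρ g))).2 <|
    Set.range_subset_iff.2 fun h => subset_span ⟨g * h, by simp⟩

/-- The vector `v`, as an element of the subrepresentation that it generates. -/
def cyclicGenerator (ρ : Representation k G V) (v : V) : (cyclicSubrep ρ v).toSubmodule :=
  ⟨v, subset_span ⟨1, by simp⟩⟩

lemma span_orbit_cyclicGenerator (ρ : Representation k G V) (v : V) :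
    span k (Set.range fun g =>
      (cyclicSubrep ρ v).toRepresentation g (cyclicGenerator ρ v)) = ⊤ := by
  apply map_injective_of_injective (cyclicSubrep ρ v).toSubmodule.injective_subtype
  rw [map_span, Submodule.map_top, range_subtype, ← Set.range_comp]
  rfl

lemma intertwiningMap_ext_of_span_orbit {ρ : Representation k G V} {σ : Representation k G W}
    {v : V} (hv : span k (Set.range fun g => ρ g v) = ⊤) {f f' : IntertwiningMap ρ σ}
    (h : f v = f' v) : f = f' := by
  refine IntertwiningMap.ext (LinearMap.ext_on_range hv fun g => ?_)
  rw [IntertwiningMap.toLinearMap_apply, IntertwiningMap.toLinearMap_apply,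
    IntertwiningMap.isIntertwining, IntertwiningMap.isIntertwining, h]

end Monoid

section Field

variable {k G V W X : Type*} [Field k] [Group G] [AddCommMonoid V] [Module k V] [AddCommGroup W]
  [Module k W] [AddCommGroup X] [Module k X] {ρ : Representation k G V} {σ : Representation k G W}
  {τ : Representation k G X}

lemma finrank_intertwiningMap_eq_one {v : V} {w : W}
    (hv : span k (Set.range fun g => ρ g v) = ⊤)
    (h : ∀ f : IntertwiningMap ρ σ, ∃ c : k, f v = c • w)
    (h₀ : ∃ f : IntertwiningMap ρ σ, f v ≠ 0) : finrank k (IntertwiningMap ρ σ) = 1 := by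
  obtain ⟨f₀, hf₀⟩ := h₀
  obtain ⟨c₀, hc₀⟩ := h f₀
  have hc₀' : c₀ ≠ 0 := by
    rintro rfl
    exact hf₀ (by rw [hc₀, zero_smul])
  refine finrank_eq_one f₀ (fun h0 => hf₀ (by rw [h0]; rfl)) fun f => ?_
  obtain ⟨c, hc⟩ := h f
  refine ⟨c * c₀⁻¹, intertwiningMap_ext_of_span_orbit hv ?_⟩
  change (c * c₀⁻¹) • f₀ v = f v
  rw [hc₀, hc, smul_smul, inv_mul_cancel_right₀ hc₀']

lemma exists_intertwiningMap_comp_comp_eq_self [Finite G] [NeZero (Nat.card G : k)]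
    (β : IntertwiningMap σ τ) : ∃ θ : IntertwiningMap τ σ, ∀ w, β (θ (β w)) = β w := by
  obtain ⟨t, ht⟩ := exists_comp_comp_eq_self (IntertwiningMap.equivLinearMapAsModule σ τ β)
  exact ⟨(IntertwiningMap.equivLinearMapAsModule τ σ).symm t, LinearMap.congr_fun ht⟩

lemma exists_intertwiningMap_apply_ne_zero [Finite G] [NeZero (Nat.card G : k)]
    (α : IntertwiningMap ρ τ) (β : IntertwiningMap σ τ) {a : V} {b : W} (h : α a = β b)
    (hne : β b ≠ 0) : ∃ f : IntertwiningMap ρ σ, f a ≠ 0 := by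
  obtain ⟨θ, hθ⟩ := exists_intertwiningMap_comp_comp_eq_self β
  refine ⟨θ.comp α, fun h0 => hne ?_⟩
  rw [← hθ, ← h, show θ (α a) = 0 from h0, map_zero]

end Field

end CyclicRepresentations

section OuterTensor

variable {k G H V W : Type*}

section CommSemiring

variable [CommSemiring k] [Monoid G] [Monoid H] [AddCommMonoid V] [Module k V] [AddCommMonoid W]
  [Module k W]

/-- The outer tensor product `ρ ⊠ σ`. -/
noncomputable def outerTensor (ρ : Representation k G V) (σ : Representation k H W) :
    Representation k (G × H) (V ⊗[k] W) :=
  tprod (MonoidHom.comp ρ (MonoidHom.fst G H)) (MonoidHom.comp σ (MonoidHom.snd G H))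

@[simp]
lemma outerTensor_tmul (ρ : Representation k G V) (σ : Representation k H W) (p : G × H) (v : V)
    (w : W) : outerTensor ρ σ p (v ⊗ₜ w) = ρ p.1 v ⊗ₜ σ p.2 w := rfl

lemma span_orbit_outerTensor {ρ : Representation k G V} {σ : Representation k H W} {v : V} {w : W}
    (hv : span k (Set.range fun g => ρ g v) = ⊤) (hw : span k (Set.range fun h => σ h w) = ⊤) :
    span k (Set.range fun p => outerTensor ρ σ p (v ⊗ₜ w)) = ⊤ := by
  rw [← TensorProduct.map₂_mk_top_top_eq_top, ← hv, ← hw, map₂_span_span, Set.image2_range]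
  rfl

end CommSemiring

lemma character_outerTensor [Field k] [Monoid G] [Monoid H] [AddCommGroup V] [Module k V]
    [FiniteDimensional k V] [AddCommGroup W] [Module k W] [FiniteDimensional k W]
    (ρ : Representation k G V) (σ : Representation k H W) :
    (outerTensor ρ σ).character = fun p => ρ.character p.1 * σ.character p.2 :=
  char_tensor _ _

end OuterTensor

section OrderedSums

variable {α M : Type*} [AddCommGroup M] [LinearOrder M] [IsOrderedAddMonoid M] {f : α → M}
  {s t : Finset α}

lemma sum_le_sum_of_neg_iff_mem (hf : ∀ a, f a < 0 ↔ a ∈ t) : ∑ a ∈ t, f a ≤ ∑ a ∈ s, f a := by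
  rw [← Finset.sum_sdiff_le_sum_sdiff]
  exact (Finset.sum_nonpos fun a ha => ((hf a).2 (Finset.mem_sdiff.1 ha).1).le).trans
    (Finset.sum_nonneg fun a ha => not_lt.1 fun h => (Finset.mem_sdiff.1 ha).2 ((hf a).1 h))

lemma subset_of_neg_iff_mem_of_sum_le (hf : ∀ a, f a < 0 ↔ a ∈ t)
    (h : ∑ a ∈ s, f a ≤ ∑ a ∈ t, f a) : t ⊆ s := by
  by_contra hts
  refine h.not_gt (Finset.sum_sdiff_lt_sum_sdiff.1 (lt_of_lt_of_le (b := 0) ?_ ?_))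
  · exact Finset.sum_neg (fun a ha => (hf a).2 (Finset.mem_sdiff.1 ha).1)
      (Finset.sdiff_nonempty.2 hts)
  · exact Finset.sum_nonneg fun a ha => not_lt.1 fun h => (Finset.mem_sdiff.1 ha).2 ((hf a).1 h)

end OrderedSums

section Diagrams

/-- The sum of the row indices of the cells of a diagram, usually denoted `n(μ)`. It orders the
irreducible characters in the unitriangularity argument. -/
def rowIndexSum (μ : YoungDiagram) : ℕ := ∑ p ∈ μ.cells, p.1

lemma sub_colLen_neg_iff_mem {μ : YoungDiagram} (p : ℕ × ℕ) :
    (p.1 - μ.colLen p.2 : ℤ) < 0 ↔ p ∈ μ.cells := by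
  rw [sub_neg, Nat.cast_lt, ← YoungDiagram.mem_iff_lt_colLen, YoungDiagram.mem_cells]

lemma mem_biUnion_doubleCell {s : Finset (ℕ × ℕ)} {i j : ℕ} :
    (i, j) ∈ s.biUnion (fun p => {(p.1, 2 * p.2), (p.1, 2 * p.2 + 1)}) ↔ (i, j / 2) ∈ s := by
  simp only [Finset.mem_biUnion, Finset.mem_insert, Finset.mem_singleton, Prod.mk.injEq]
  constructor
  · rintro ⟨⟨a, b⟩, h, ⟨rfl, rfl⟩ | ⟨rfl, rfl⟩⟩
    · rwa [Nat.mul_div_cancel_left _ two_pos]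
    · rwa [Nat.mul_add_div two_pos, Nat.div_eq_of_lt one_lt_two, add_zero]
  · exact fun h => ⟨_, h, by omega⟩

/-- The diagram `2μ` obtained from `μ` by doubling the length of each row. -/
def doubleRows (μ : YoungDiagram) : YoungDiagram where
  cells := μ.cells.biUnion fun p => {(p.1, 2 * p.2), (p.1, 2 * p.2 + 1)}
  isLowerSet := by
    rintro ⟨i, j⟩ ⟨i', j'⟩ ⟨hi, hj⟩ h
    rw [Finset.mem_coe, mem_biUnion_doubleCell] at h ⊢
    exact μ.up_left_mem hi (Nat.div_le_div_right hj) h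

lemma mem_doubleRows {μ : YoungDiagram} {i j : ℕ} : (i, j) ∈ doubleRows μ ↔ (i, j / 2) ∈ μ :=
  mem_biUnion_doubleCell

lemma doubleRows_injective : Function.Injective doubleRows := by
  intro μ ν h
  ext ⟨i, j⟩
  have hμ := mem_doubleRows (μ := μ) (i := i) (j := 2 * j)
  rw [h, mem_doubleRows, Nat.mul_div_cancel_left _ two_pos] at hμ
  exact hμ.symm

lemma sum_rowLens (μ : YoungDiagram) : μ.rowLens.sum = μ.card := by
  have hmaps : ∀ p ∈ μ.cells, p.1 ∈ Finset.range (μ.colLen 0) := fun p hp =>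
    Finset.mem_range.2 <| YoungDiagram.mem_iff_lt_colLen.1 <| μ.up_left_mem le_rfl p.2.zero_le hp
  calc μ.rowLens.sum
    _ = ∑ i ∈ Finset.range (μ.colLen 0), μ.rowLen i := rfl
    _ = μ.card := by
      simp only [YoungDiagram.card, Finset.card_eq_sum_card_fiberwise hmaps,
        YoungDiagram.rowLen_eq_card, YoungDiagram.row]

lemma sortedGE_sort {n : ℕ} (p : n.Partition) : (p.parts.sort (· ≥ ·)).SortedGE :=
  (Multiset.pairwise_sort _ _).sortedGE

lemma rowLens_ofRowLens_sort {n : ℕ} (p : n.Partition) :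
    (YoungDiagram.ofRowLens _ (sortedGE_sort p)).rowLens = p.parts.sort (· ≥ ·) :=
  YoungDiagram.rowLens_ofRowLens_eq_self fun _ hi => p.parts_pos ((Multiset.mem_sort _).1 hi)

/-- The Young diagrams with `n` cells. -/
abbrev DiagramOfCard (n : ℕ) : Type := {μ : YoungDiagram // μ.card = n}

/-- A diagram corresponds to the partition formed by the lengths of its rows. -/
def diagramEquivPartition (n : ℕ) : DiagramOfCard n ≃ n.Partition where
  toFun μ :=
    { parts := μ.1.rowLens
      parts_pos := fun {i} hi => μ.1.pos_of_mem_rowLens i hi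
      parts_sum := by rw [Multiset.sum_coe, sum_rowLens, μ.2] }
  invFun p := ⟨YoungDiagram.ofRowLens _ (sortedGE_sort p), by
    rw [← sum_rowLens, rowLens_ofRowLens_sort, ← Multiset.sum_coe, Multiset.sort_eq, p.parts_sum]⟩
  left_inv μ := by
    have hsort : (μ.1.rowLens : Multiset ℕ).sort (· ≥ ·) = μ.1.rowLens := by
      rw [Multiset.coe_sort, List.mergeSort_eq_self]
      exact μ.1.rowLens_sorted.pairwise
    simp only [hsort, YoungDiagram.ofRowLens_to_rowLens_eq_self]
  right_inv p := by
    ext1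
    simp only [rowLens_ofRowLens_sort, Multiset.sort_eq]

noncomputable instance (n : ℕ) : Fintype (DiagramOfCard n) :=
  Fintype.ofEquiv _ (diagramEquivPartition n).symm

lemma card_diagramOfCard (n : ℕ) : Fintype.card (DiagramOfCard n) = Fintype.card n.Partition :=
  Fintype.card_congr (diagramEquivPartition n)

lemma card_conjClasses_perm_le (Ω : Type*) [Fintype Ω] :
    Nat.card (ConjClasses (Perm Ω)) ≤ Nat.card (DiagramOfCard (Fintype.card Ω)) := by
  rw [Nat.card_congr (diagramEquivPartition _)]
  refine Nat.card_le_card_of_injective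
    (Quotient.lift Perm.partition fun _ _ => Perm.partition_eq_of_isConj.1) ?_
  rintro ⟨σ⟩ ⟨τ⟩ h
  exact Quotient.sound (Perm.partition_eq_of_isConj.2 h)

end Diagrams

/-- A filling of the cells of the Young diagram `μ` with the elements of `Ω`, each used exactly
once, recorded by the row and the column that contain a given element. -/
structure Tableau (Ω : Type*) (μ : YoungDiagram) where
  row : Ω → ℕ
  col : Ω → ℕ
  injective : Function.Injective fun x => (row x, col x)
  mem_iff : ∀ {i j}, (i, j) ∈ μ ↔ ∃ x, row x = i ∧ col x = j

namespace Tableau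

variable {Ω : Type*} {μ ν : YoungDiagram}

lemma ext_row_col (T : Tableau Ω μ) {x y : Ω} (hr : T.row x = T.row y) (hc : T.col x = T.col y) :
    x = y :=
  T.injective (Prod.ext hr hc)

/-- The tableau of shape `2μ` made of two copies of `T`, with their columns interleaved. -/
def double (T : Tableau Ω μ) : Tableau (Ω ⊕ Ω) (doubleRows μ) where
  row := Sum.elim T.row T.row
  col := Sum.elim (fun x => 2 * T.col x) fun x => 2 * T.col x + 1
  injective := by
    rintro (x | x) (y | y) h <;> simp only [Sum.elim_inl, Sum.elim_inr, Prod.mk.injEq] at h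
    · rw [T.ext_row_col h.1 (by omega)]
    · omega
    · omega
    · rw [T.ext_row_col h.1 (by omega)]
  mem_iff {i j} := by
    simp only [mem_doubleRows, T.mem_iff, Sum.exists, Sum.elim_inl, Sum.elim_inr, ← exists_or,
      ← and_or_left]
    exact exists_congr fun x => and_congr_right fun _ => by omega

lemma nonempty_of_card_eq [Fintype Ω] (h : μ.card = Fintype.card Ω) : Nonempty (Tableau Ω μ) := by
  obtain ⟨e⟩ : Nonempty (Ω ≃ μ.cells) := Fintype.card_eq.1 (by rw [← h, Fintype.card_coe])
  exact ⟨{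
    row x := (e x).1.1
    col x := (e x).1.2
    injective := Subtype.val_injective.comp e.injective
    mem_iff {i j} := ⟨fun h => ⟨e.symm ⟨(i, j), h⟩, by simp⟩, by
      rintro ⟨x, rfl, rfl⟩
      exact (e x).2⟩ }⟩

section Fintype

variable [Fintype Ω]

lemma image_univ (T : Tableau Ω μ) : Finset.univ.image (fun x => (T.row x, T.col x)) = μ.cells := by
  ext ⟨i, j⟩
  simp [T.mem_iff]

lemma sum_cells {M : Type*} [AddCommMonoid M] (T : Tableau Ω μ) (f : ℕ × ℕ → M) :
    ∑ p ∈ μ.cells, f p = ∑ x, f (T.row x, T.col x) := by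
  rw [← T.image_univ, Finset.sum_image T.injective.injOn]

lemma sum_row (T : Tableau Ω μ) : ∑ x, T.row x = rowIndexSum μ :=
  (T.sum_cells Prod.fst).symm

lemma card_shape (T : Tableau Ω μ) : μ.card = Fintype.card Ω := by
  rw [YoungDiagram.card, ← T.image_univ, Finset.card_image_of_injective _ T.injective,
    Finset.card_univ]

end Fintype

section Finite

variable [Finite Ω]

lemma rowLen_eq_card (T : Tableau Ω μ) (i : ℕ) : μ.rowLen i = Nat.card {x // T.row x = i} := by
  have := Fintype.ofFinite Ω
  rw [YoungDiagram.rowLen_eq_card, YoungDiagram.row, ← T.image_univ, Finset.filter_image,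
    Finset.card_image_of_injective _ T.injective, Nat.card_eq_fintype_card, Fintype.card_subtype]

lemma shape_eq_of_row_comp (T : Tableau Ω μ) (T' : Tableau Ω ν) (g : Perm Ω)
    (h : ∀ x, T.row x = T'.row (g x)) : μ = ν := by
  ext ⟨i, j⟩
  have hcard : μ.rowLen i = ν.rowLen i := by
    rw [T.rowLen_eq_card, T'.rowLen_eq_card]
    exact Nat.card_congr (g.subtypeEquiv fun x => by rw [h])
  rw [YoungDiagram.mem_cells, YoungDiagram.mem_cells, YoungDiagram.mem_iff_lt_rowLen,
    YoungDiagram.mem_iff_lt_rowLen, hcard]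

lemma exists_perm_row_col (T U : Tableau Ω μ) :
    ∃ k : Perm Ω, ∀ x, T.row (k x) = U.row x ∧ T.col (k x) = U.col x := by
  choose k hk using fun x => T.mem_iff.1 (U.mem_iff.2 ⟨x, rfl, rfl⟩)
  have hinj : Function.Injective k := fun x y h =>
    U.ext_row_col (by rw [← (hk x).1, ← (hk y).1, h]) (by rw [← (hk x).2, ← (hk y).2, h])
  exact ⟨Equiv.ofBijective k (Finite.injective_iff_bijective.1 hinj), hk⟩

end Finite

section ChangeOfRows

variable [Fintype Ω] (T : Tableau Ω μ) {r : Ω → ℕ} (hr : Function.Injective fun x => (r x, T.col x))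

include hr

-- `T` and the new filling have the same columns, so subtracting `colLen` shifts both sums equally;
-- it turns the row index into a weight that is negative exactly on the cells of `μ`.
lemma sum_image_sub_sum_cells :
    (∑ p ∈ Finset.univ.image fun x => (r x, T.col x), (p.1 - μ.colLen p.2 : ℤ)) -
      ∑ p ∈ μ.cells, (p.1 - μ.colLen p.2 : ℤ) = ∑ x, r x - rowIndexSum μ := by
  rw [Finset.sum_image hr.injOn, T.sum_cells, Finset.sum_sub_distrib, Finset.sum_sub_distrib,
    ← T.sum_row, sub_sub_sub_cancel_right]
  push_cast
  rfl

lemma rowIndexSum_le : rowIndexSum μ ≤ ∑ x, r x := by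
  rw [← Nat.cast_le (α := ℤ), ← sub_nonneg, ← T.sum_image_sub_sum_cells hr, sub_nonneg]
  exact sum_le_sum_of_neg_iff_mem sub_colLen_neg_iff_mem

lemma image_eq_cells (hsum : ∑ x, r x = rowIndexSum μ) :
    Finset.univ.image (fun x => (r x, T.col x)) = μ.cells := by
  refine (Finset.eq_of_subset_of_card_le ?_ ?_).symm
  · refine subset_of_neg_iff_mem_of_sum_le sub_colLen_neg_iff_mem ?_
    rw [← sub_nonpos, T.sum_image_sub_sum_cells hr, hsum, sub_self]
  · rw [Finset.card_image_of_injective _ hr, Finset.card_univ, ← T.card_shape]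

/-- The tableau with the columns of `T` and the rows `r`. It has the shape of `T` provided that no
two elements of a column of `T` share a row and that the row indices have the same sum. -/
def withRows (hsum : ∑ x, r x = rowIndexSum μ) : Tableau Ω μ where
  row := r
  col := T.col
  injective := hr
  mem_iff {i j} := by
    rw [← YoungDiagram.mem_cells, ← T.image_eq_cells hr hsum]
    simp

end ChangeOfRows

end Tableau

section DoubleDiagram

variable {Ω : Type*} [Fintype Ω]

/-- A chosen tableau of a given shape. -/
noncomputable def tableauOfShape (μ : DiagramOfCard (Fintype.card Ω)) : Tableau Ω μ.1 :=
  (Tableau.nonempty_of_card_eq μ.2).some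

/-- The diagram `2μ`, labelling a character of `Perm (Ω ⊕ Ω)` if `μ` labels one of `Perm Ω`. -/
def doubleDiagram (μ : DiagramOfCard (Fintype.card Ω)) : DiagramOfCard (Fintype.card (Ω ⊕ Ω)) :=
  ⟨doubleRows μ.1, (tableauOfShape μ).double.card_shape⟩

variable (Ω) in
lemma doubleDiagram_injective : Function.Injective (doubleDiagram (Ω := Ω)) :=
  fun _ _ h => Subtype.ext (doubleRows_injective (congr_arg Subtype.val h))

end DoubleDiagram

section FiberStabilizer

variable {Ω Ω' α β : Type*}

/-- The group of the permutations that preserve every fibre of `f`. The row and the column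
stabilizer of a tableau are of this form. -/
def fiberStabilizer (f : Ω → α) : Subgroup (Perm Ω) where
  carrier := {σ | ∀ x, f (σ x) = f x}
  one_mem' _ := rfl
  mul_mem' hσ hτ x := (hσ _).trans (hτ x)
  inv_mem' {σ} hσ x := by simpa using (hσ (σ⁻¹ x)).symm

lemma swap_mem_fiberStabilizer [DecidableEq Ω] {f : Ω → α} {x y : Ω} (h : f x = f y) :
    swap x y ∈ fiberStabilizer f := by
  intro z
  rw [swap_apply_def]
  split_ifs with hx hy
  · rw [hx, h]
  · rw [hy, h]
  · rfl

lemma sumCongrHom_mem_fiberStabilizer {f : Ω → α} {g : Ω' → α} {p : Perm Ω × Perm Ω'} :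
    Perm.sumCongrHom Ω Ω' p ∈ fiberStabilizer (Sum.elim f g) ↔
      p.1 ∈ fiberStabilizer f ∧ p.2 ∈ fiberStabilizer g :=
  Sum.forall

lemma fiberStabilizer_comp {e : α → β} (he : Function.Injective e) (f : Ω → α) :
    fiberStabilizer (fun x => e (f x)) = fiberStabilizer f :=
  Subgroup.ext fun _ => forall_congr' fun _ => he.eq_iff

lemma fiberStabilizer_sumElim_le_range [Finite Ω] [Finite Ω'] {f : Ω → α} {g : Ω' → α}
    (h : ∀ x y, f x ≠ g y) :
    fiberStabilizer (Sum.elim f g) ≤ (Perm.sumCongrHom Ω Ω').range := by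
  intro σ hσ
  refine Perm.mem_sumCongrHom_range_of_perm_mapsTo_inl ?_
  rintro _ ⟨x, rfl⟩
  rcases hx : σ (Sum.inl x) with y | y
  · exact ⟨y, rfl⟩
  · have := hσ (Sum.inl x)
    rw [hx] at this
    exact absurd this.symm (h x y)

end FiberStabilizer

namespace Tableau

section Stabilizers

variable {Ω : Type*} {μ : YoungDiagram} (T : Tableau Ω μ)

/-- The permutations that preserve each row. -/
abbrev rowStabilizer : Subgroup (Perm Ω) := fiberStabilizer T.row

/-- The permutations that preserve each column. -/
abbrev colStabilizer : Subgroup (Perm Ω) := fiberStabilizer T.col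

variable {T} in
lemma eq_one_of_mem_stabilizers {k : Perm Ω} (hr : k ∈ T.rowStabilizer)
    (hc : k ∈ T.colStabilizer) : k = 1 :=
  Equiv.ext fun x => T.ext_row_col (hr x) (hc x)

lemma sumCongrHom_mem_rowStabilizer_double {p : Perm Ω × Perm Ω} :
    Perm.sumCongrHom Ω Ω p ∈ T.double.rowStabilizer ↔
      p.1 ∈ T.rowStabilizer ∧ p.2 ∈ T.rowStabilizer :=
  sumCongrHom_mem_fiberStabilizer

lemma sumCongrHom_mem_colStabilizer_double {p : Perm Ω × Perm Ω} :
    Perm.sumCongrHom Ω Ω p ∈ T.double.colStabilizer ↔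
      p.1 ∈ T.colStabilizer ∧ p.2 ∈ T.colStabilizer := by
  rw [colStabilizer, double, sumCongrHom_mem_fiberStabilizer,
    fiberStabilizer_comp (e := fun n => 2 * n) (mul_right_injective₀ two_ne_zero),
    fiberStabilizer_comp (e := fun n => 2 * n + 1)
      ((add_left_injective 1).comp (mul_right_injective₀ two_ne_zero))]

lemma colStabilizer_double_le_range [Finite Ω] :
    T.double.colStabilizer ≤ (Perm.sumCongrHom Ω Ω).range :=
  fiberStabilizer_sumElim_le_range fun x y => by omega

variable {T} in
lemma exists_mem_colStabilizer_mul_inv_mem_rowStabilizer [Finite Ω] {g : Perm Ω}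
    (hg : Function.Injective fun x => (T.row (g x), T.col x)) :
    ∃ k ∈ T.colStabilizer, g * k⁻¹ ∈ T.rowStabilizer := by
  have := Fintype.ofFinite Ω
  obtain ⟨k, hk⟩ := T.exists_perm_row_col
    (T.withRows hg (by rw [Equiv.sum_comp g T.row, T.sum_row]))
  exact ⟨k, fun x => (hk x).2, fun x =>
    (hk (k⁻¹ x)).1.symm.trans (congr_arg T.row (k.apply_symm_apply x))⟩

end Stabilizers

section Symmetrizer

variable {Ω : Type*} {μ ν : YoungDiagram} (T : Tableau Ω μ)

/-- The functions on the symmetric group that are invariant under left translation by the row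
stabilizer. -/
def rowInvariant : Submodule ℂ (Perm Ω → ℂ) where
  carrier := {f | ∀ h ∈ T.rowStabilizer, ∀ x, f (h * x) = f x}
  zero_mem' _ _ _ := rfl
  add_mem' hf hf' h hh x := congr_arg₂ (· + ·) (hf h hh x) (hf' h hh x)
  smul_mem' c _ hf h hh x := congr_arg (c * ·) (hf h hh x)

variable [Fintype Ω] [DecidableEq Ω]

/-- The functions on the symmetric group on which the column stabilizer acts by the sign, through
right translation. -/
def colAlternating : Submodule ℂ (Perm Ω → ℂ) where
  carrier := {f | ∀ k ∈ T.colStabilizer, ∀ x, f (x * k) = (Perm.sign k : ℤ) * f x}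
  zero_mem' _ _ _ := (mul_zero _).symm
  add_mem' hf hf' k hk x := (congr_arg₂ (· + ·) (hf k hk x) (hf' k hk x)).trans (mul_add _ _ _).symm
  smul_mem' c _ hf k hk x := (congr_arg (c * ·) (hf k hk x)).trans (mul_left_comm _ _ _)

/-- The Young symmetrizer, as the function that takes the value `sign k` at `h * k` for `h` in the
row stabilizer and `k` in the column stabilizer, and vanishes elsewhere. -/
noncomputable def symmetrizer (x : Perm Ω) : ℂ :=
  ∑ k, if k ∈ T.colStabilizer ∧ x * k⁻¹ ∈ T.rowStabilizer then ((Perm.sign k : ℤ) : ℂ) else 0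

lemma symmetrizer_mem_rowInvariant : T.symmetrizer ∈ T.rowInvariant := by
  intro h hh x
  simp only [symmetrizer, mul_assoc, Subgroup.mul_mem_cancel_left _ hh]

lemma symmetrizer_mem_colAlternating : T.symmetrizer ∈ T.colAlternating := by
  intro k hk x
  rw [symmetrizer, symmetrizer, ← Equiv.sum_comp (Equiv.mulRight k), Finset.mul_sum]
  refine Finset.sum_congr rfl fun k' _ => ?_
  simp only [coe_mulRight, Subgroup.mul_mem_cancel_right _ hk, mul_inv_rev, mul_inv_cancel_left,
    mul_assoc, mul_ite, mul_zero, Perm.sign_mul, Units.val_mul, Int.cast_mul]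
  rw [mul_comm ((Perm.sign k : ℤ) : ℂ)]

lemma symmetrizer_one : T.symmetrizer 1 = 1 := by
  rw [symmetrizer, Finset.sum_eq_single 1]
  · simp [one_mem]
  · rintro k - hk
    refine if_neg fun ⟨hc, hr⟩ => hk (eq_one_of_mem_stabilizers ?_ hc)
    rwa [one_mul, inv_mem_iff] at hr
  · simp

lemma symmetrizer_double (p : Perm Ω × Perm Ω) :
    T.double.symmetrizer (Perm.sumCongrHom Ω Ω p) = T.symmetrizer p.1 * T.symmetrizer p.2 := by
  rw [symmetrizer, symmetrizer, symmetrizer, Fintype.sum_mul_sum, ← Fintype.sum_prod_type']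
  refine (Fintype.sum_of_injective _ Perm.sumCongrHom_injective _ _ (fun k hk => ?_)
    fun q => ?_).symm
  · exact if_neg fun h => hk (T.colStabilizer_double_le_range h.1)
  · have hsign : Perm.sign (Perm.sumCongrHom Ω Ω q) = Perm.sign q.1 * Perm.sign q.2 :=
      Perm.sign_sumCongr q.1 q.2
    simp only [← map_inv (Perm.sumCongrHom Ω Ω), ← map_mul (Perm.sumCongrHom Ω Ω), hsign,
      sumCongrHom_mem_colStabilizer_double, sumCongrHom_mem_rowStabilizer_double, Prod.fst_mul,
      Prod.snd_mul, Prod.fst_inv, Prod.snd_inv, ite_zero_mul_ite_zero, and_and_and_comm,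
      Units.val_mul, Int.cast_mul]

variable {T} {T' : Tableau Ω ν} {f : Perm Ω → ℂ} (hc : f ∈ T.colAlternating)

include hc

lemma injective_of_apply_ne_zero (hr : f ∈ T'.rowInvariant) {g : Perm Ω} (hg : f g ≠ 0) :
    Function.Injective fun x => (T'.row (g x), T.col x) := by
  intro x y h
  obtain ⟨hrow, hcol⟩ := Prod.mk.inj h
  by_contra hne
  -- `g * swap x y = swap (g x) (g y) * g`: a column swap on the right is a row swap on the left.
  have h1 := hc _ (swap_mem_fiberStabilizer hcol) g
  rw [mul_swap_eq_swap_mul, hr _ (swap_mem_fiberStabilizer hrow), Perm.sign_swap hne] at h1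
  exact hg (self_eq_neg.1 (by simpa using h1))

lemma eq_or_rowIndexSum_lt (hr : f ∈ T'.rowInvariant) (hf : f ≠ 0) :
    μ = ν ∨ rowIndexSum μ < rowIndexSum ν := by
  obtain ⟨g, hg⟩ := Function.ne_iff.1 hf
  have hinj := injective_of_apply_ne_zero hc hr hg
  have hsum : ∑ x, T'.row (g x) = rowIndexSum ν := by rw [Equiv.sum_comp g T'.row, T'.sum_row]
  refine (T.rowIndexSum_le hinj).eq_or_lt.imp (fun h => ?_) fun h => h.trans_eq hsum
  exact (T.withRows hinj h.symm).shape_eq_of_row_comp T' g fun _ => rfl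

lemma apply_eq_sign_mul (hr : f ∈ T.rowInvariant) {g k : Perm Ω} (hk : k ∈ T.colStabilizer)
    (hgk : g * k⁻¹ ∈ T.rowStabilizer) : f g = (Perm.sign k : ℤ) * f 1 := by
  rw [← hc k hk, one_mul, ← hr _ hgk k, inv_mul_cancel_right]

lemma eq_smul_symmetrizer (hr : f ∈ T.rowInvariant) : f = f 1 • T.symmetrizer := by
  ext g
  rw [Pi.smul_apply, smul_eq_mul]
  by_cases hg : Function.Injective fun x => (T.row (g x), T.col x)
  · obtain ⟨k, hk, hgk⟩ := exists_mem_colStabilizer_mul_inv_mem_rowStabilizer hg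
    rw [apply_eq_sign_mul hc hr hk hgk, apply_eq_sign_mul T.symmetrizer_mem_colAlternating
      T.symmetrizer_mem_rowInvariant hk hgk, symmetrizer_one, mul_one, mul_comm]
  · have vanish {f' : Perm Ω → ℂ} (hc' : f' ∈ T.colAlternating) (hr' : f' ∈ T.rowInvariant) :
        f' g = 0 := not_imp_comm.1 (injective_of_apply_ne_zero hc' hr') hg
    rw [vanish hc hr, vanish T.symmetrizer_mem_colAlternating T.symmetrizer_mem_rowInvariant,
      mul_zero]

end Symmetrizer

end Tableau

namespace Tableau

section Specht

variable {Ω : Type} [Fintype Ω] [DecidableEq Ω] {μ ν : YoungDiagram} (T : Tableau Ω μ)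

/-- The Specht module of a tableau, realized inside the functions on the symmetric group. -/
noncomputable def specht : Subrepresentation (rightRegular : Representation ℂ (Perm Ω) _) :=
  cyclicSubrep _ T.symmetrizer

/-- The generator of the Specht module, given by the symmetrizer. -/
noncomputable def spechtGenerator : T.specht.toSubmodule := cyclicGenerator _ T.symmetrizer

/-- The character of the Specht module. -/
noncomputable def spechtChar : Perm Ω → ℂ := T.specht.toRepresentation.character

lemma span_orbit_spechtGenerator :
    span ℂ (Set.range fun g => T.specht.toRepresentation g T.spechtGenerator) = ⊤ :=
  span_orbit_cyclicGenerator _ _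

lemma spechtGenerator_ne_zero : T.spechtGenerator ≠ 0 := fun h =>
  one_ne_zero (T.symmetrizer_one.symm.trans (congr_fun (congr_arg Subtype.val h) 1))

lemma specht_le_rowInvariant : T.specht.toSubmodule ≤ T.rowInvariant := by
  rw [specht, cyclicSubrep, span_le, Set.range_subset_iff]
  intro g h hh x
  rw [rightRegular_apply, rightRegular_apply, mul_assoc, T.symmetrizer_mem_rowInvariant h hh]

lemma specht_apply_spechtGenerator {k : Perm Ω} (hk : k ∈ T.colStabilizer) :
    T.specht.toRepresentation k T.spechtGenerator =
      ((Perm.sign k : ℤ) : ℂ) • T.spechtGenerator :=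
  Subtype.ext (funext (T.symmetrizer_mem_colAlternating k hk))

section Intertwining

variable {T} {G V : Type*} [Group G] [AddCommMonoid V] [Module ℂ V] {ρ : Representation ℂ G V}
  {φ : G →* Perm Ω} {v : V}
  (hv : ∀ k ∈ T.colStabilizer, ∃ g, φ g = k ∧ ρ g v = ((Perm.sign k : ℤ) : ℂ) • v)

include hv

lemma intertwiningMap_apply_mem_colAlternating {T' : Tableau Ω ν}
    (f : IntertwiningMap ρ (MonoidHom.comp T'.specht.toRepresentation φ)) :
    (f v : Perm Ω → ℂ) ∈ T.colAlternating := by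
  intro k hk x
  obtain ⟨g, rfl, hg⟩ := hv k hk
  have hf := f.isIntertwining _ _ g v
  rw [hg, map_smul] at hf
  exact (congr_fun (congr_arg Subtype.val hf) x).symm

variable (hspan : span ℂ (Set.range fun g => ρ g v) = ⊤)

include hspan

lemma eq_or_rowIndexSum_lt_of_finrank_ne_zero {T' : Tableau Ω ν}
    (h : finrank ℂ (IntertwiningMap ρ (MonoidHom.comp T'.specht.toRepresentation φ)) ≠ 0) :
    μ = ν ∨ rowIndexSum μ < rowIndexSum ν := by
  have : Nontrivial (IntertwiningMap ρ (MonoidHom.comp T'.specht.toRepresentation φ)) :=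
    not_subsingleton_iff_nontrivial.1 fun _ => h finrank_zero_of_subsingleton
  obtain ⟨f, hf⟩ := exists_ne
    (0 : IntertwiningMap ρ (MonoidHom.comp T'.specht.toRepresentation φ))
  exact eq_or_rowIndexSum_lt (intertwiningMap_apply_mem_colAlternating hv f)
    (T'.specht_le_rowInvariant (f v).2)
    fun h0 => hf (intertwiningMap_ext_of_span_orbit hspan (Subtype.ext h0))

lemma finrank_intertwiningMap_specht_eq_one
    (h₀ : ∃ f : IntertwiningMap ρ (MonoidHom.comp T.specht.toRepresentation φ), f v ≠ 0) :
    finrank ℂ (IntertwiningMap ρ (MonoidHom.comp T.specht.toRepresentation φ)) = 1 :=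
  finrank_intertwiningMap_eq_one hspan (w := T.spechtGenerator)
    (fun f => ⟨(f v : Perm Ω → ℂ) 1, Subtype.ext <| eq_smul_symmetrizer
      (intertwiningMap_apply_mem_colAlternating hv f) (T.specht_le_rowInvariant (f v).2)⟩) h₀

end Intertwining

lemma isIrrChar_spechtChar : IsIrrChar (Perm Ω) T.spechtChar :=
  isIrrChar_character <| finrank_intertwiningMap_specht_eq_one (φ := MonoidHom.id _)
    (fun k hk => ⟨k, rfl, T.specht_apply_spechtGenerator hk⟩) T.span_orbit_spechtGenerator
    ⟨IntertwiningMap.id _, T.spechtGenerator_ne_zero⟩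

variable {T} {T' : Tableau Ω ν}

lemma eq_or_rowIndexSum_lt_of_spechtChar_eq (h : T.spechtChar = T'.spechtChar) :
    μ = ν ∨ rowIndexSum μ < rowIndexSum ν := by
  refine eq_or_rowIndexSum_lt_of_finrank_ne_zero (T' := T') (φ := MonoidHom.id _)
    (fun k hk => ⟨k, rfl, T.specht_apply_spechtGenerator hk⟩) T.span_orbit_spechtGenerator ?_
  have hpair := charPairing_character T.specht.toRepresentation T'.specht.toRepresentation
  rw [← spechtChar, ← spechtChar, h, T'.isIrrChar_spechtChar.charPairing_self] at hpair
  exact Nat.cast_ne_zero.1 (hpair.symm.trans_ne one_ne_zero)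

lemma shape_eq_of_spechtChar_eq (h : T.spechtChar = T'.spechtChar) : μ = ν := by
  rcases eq_or_rowIndexSum_lt_of_spechtChar_eq h with h1 | h1
  · exact h1
  · rcases eq_or_rowIndexSum_lt_of_spechtChar_eq h.symm with h2 | h2
    · exact h2.symm
    · exact absurd h2 h1.not_gt

end Specht

section InducedSquare

variable {Ω : Type} [Fintype Ω] [DecidableEq Ω] {μ ν : YoungDiagram} (T : Tableau Ω μ)

/-- The generator of the outer tensor square of a Specht module. -/
noncomputable def spechtSquareGenerator : T.specht.toSubmodule ⊗[ℂ] T.specht.toSubmodule :=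
  T.spechtGenerator ⊗ₜ T.spechtGenerator

lemma span_orbit_spechtSquareGenerator :
    span ℂ (Set.range fun p => outerTensor T.specht.toRepresentation T.specht.toRepresentation p
      T.spechtSquareGenerator) = ⊤ :=
  span_orbit_outerTensor T.span_orbit_spechtGenerator T.span_orbit_spechtGenerator

lemma exists_outerTensor_apply_spechtSquareGenerator {k : Perm (Ω ⊕ Ω)}
    (hk : k ∈ T.double.colStabilizer) :
    ∃ p, Perm.sumCongrHom Ω Ω p = k ∧
      outerTensor T.specht.toRepresentation T.specht.toRepresentation p T.spechtSquareGenerator =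
        ((Perm.sign k : ℤ) : ℂ) • T.spechtSquareGenerator := by
  obtain ⟨p, rfl⟩ := T.colStabilizer_double_le_range hk
  obtain ⟨hk₁, hk₂⟩ := T.sumCongrHom_mem_colStabilizer_double.1 hk
  refine ⟨p, rfl, ?_⟩
  rw [spechtSquareGenerator, outerTensor_tmul, T.specht_apply_spechtGenerator hk₁,
    T.specht_apply_spechtGenerator hk₂, TensorProduct.smul_tmul_smul, Perm.sumCongrHom_apply,
    Perm.sign_sumCongr, Units.val_mul, Int.cast_mul]

/-- The character of `Perm (Ω ⊕ Ω)` induced from the outer tensor square of a Specht module. -/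
noncomputable def indSquare : Perm (Ω ⊕ Ω) → ℂ :=
  indHom (Perm.sumCongrHom Ω Ω) fun p => T.spechtChar p.1 * T.spechtChar p.2

lemma charPairing_indSquare (T' : Tableau (Ω ⊕ Ω) ν) :
    charPairing _ T.indSquare T'.spechtChar = finrank ℂ (IntertwiningMap
      (outerTensor T.specht.toRepresentation T.specht.toRepresentation)
      (MonoidHom.comp T'.specht.toRepresentation (Perm.sumCongrHom Ω Ω))) := by
  rw [indSquare, charPairing_indHom _ _ T'.isIrrChar_spechtChar.mem_classFunctions,
    charPairing_comm]
  have h := charPairing_character (V := T.specht.toSubmodule ⊗[ℂ] T.specht.toSubmodule)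
    (outerTensor T.specht.toRepresentation T.specht.toRepresentation)
    (MonoidHom.comp T'.specht.toRepresentation (Perm.sumCongrHom Ω Ω))
  rw [character_outerTensor] at h
  exact h

lemma doubleRows_eq_or_rowIndexSum_lt {T' : Tableau (Ω ⊕ Ω) ν}
    (h : charPairing _ T.indSquare T'.spechtChar ≠ 0) :
    doubleRows μ = ν ∨ rowIndexSum (doubleRows μ) < rowIndexSum ν := by
  rw [charPairing_indSquare, Nat.cast_ne_zero] at h
  exact eq_or_rowIndexSum_lt_of_finrank_ne_zero
    (fun _ => T.exists_outerTensor_apply_spechtSquareGenerator)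
    T.span_orbit_spechtSquareGenerator h

/-- Multiplication of functions on two copies of the symmetric group, as a map from the outer
tensor square of the Specht module to the functions on the product. -/
noncomputable def mulIntertwiningMap :
    IntertwiningMap (outerTensor T.specht.toRepresentation T.specht.toRepresentation)
      (rightRegular : Representation ℂ (Perm Ω × Perm Ω) _) where
  toLinearMap := TensorProduct.lift <|
    (LinearMap.mul ℂ (Perm Ω × Perm Ω → ℂ)).compl₁₂
      (LinearMap.funLeft ℂ ℂ Prod.fst ∘ₗ T.specht.toSubmodule.subtype)
      (LinearMap.funLeft ℂ ℂ Prod.snd ∘ₗ T.specht.toSubmodule.subtype)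
  isIntertwining' _ := TensorProduct.ext' fun _ _ => rfl

/-- Restriction of functions along a group homomorphism `φ`, as a map from the restriction of the
Specht module along `φ`. -/
noncomputable def restrictIntertwiningMap {G : Type} [Group G] (φ : G →* Perm Ω) :
    IntertwiningMap (MonoidHom.comp T.specht.toRepresentation φ)
      (rightRegular : Representation ℂ G _) where
  toLinearMap := LinearMap.funLeft ℂ ℂ φ ∘ₗ T.specht.toSubmodule.subtype
  isIntertwining' g := LinearMap.ext fun v => funext fun x =>
    congr_arg (v : Perm Ω → ℂ) (map_mul φ x g).symm

lemma exists_intertwiningMap_spechtSquareGenerator_ne_zero :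
    ∃ f : IntertwiningMap (outerTensor T.specht.toRepresentation T.specht.toRepresentation)
      (MonoidHom.comp T.double.specht.toRepresentation (Perm.sumCongrHom Ω Ω)),
      f T.spechtSquareGenerator ≠ 0 := by
  refine exists_intertwiningMap_apply_ne_zero T.mulIntertwiningMap
    (T.double.restrictIntertwiningMap _) (b := T.double.spechtGenerator)
    (funext fun p => (T.symmetrizer_double p).symm) fun h => ?_
  have h1 : T.double.symmetrizer (Perm.sumCongrHom Ω Ω 1) = 0 := congr_fun h 1
  rw [map_one, symmetrizer_one] at h1
  exact one_ne_zero h1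

lemma charPairing_indSquare_double :
    charPairing _ T.indSquare T.double.spechtChar = 1 := by
  rw [charPairing_indSquare, finrank_intertwiningMap_specht_eq_one
    (fun _ => T.exists_outerTensor_apply_spechtSquareGenerator)
    T.span_orbit_spechtSquareGenerator T.exists_intertwiningMap_spechtSquareGenerator_ne_zero,
    Nat.cast_one]

end InducedSquare

end Tableau

section DiagramCharacters

variable {Ω : Type} [Fintype Ω] [DecidableEq Ω]

/-- The irreducible character `χ^μ` of the symmetric group labelled by the diagram `μ`. -/
noncomputable def diagramChar (μ : DiagramOfCard (Fintype.card Ω)) : Perm Ω → ℂ :=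
  (tableauOfShape μ).spechtChar

lemma isIrrChar_diagramChar (μ : DiagramOfCard (Fintype.card Ω)) :
    IsIrrChar (Perm Ω) (diagramChar μ) :=
  (tableauOfShape μ).isIrrChar_spechtChar

variable (Ω)

lemma diagramChar_injective : Function.Injective (diagramChar (Ω := Ω)) :=
  fun _ _ h => Subtype.ext (Tableau.shape_eq_of_spechtChar_eq h)

lemma span_range_diagramChar :
    span ℂ (Set.range (diagramChar (Ω := Ω))) = classFunctions (Perm Ω) :=
  span_range_eq_classFunctions isIrrChar_diagramChar (diagramChar_injective Ω)
    (card_conjClasses_perm_le Ω)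

lemma range_diagramChar : Set.range (diagramChar (Ω := Ω)) = {f | IsIrrChar (Perm Ω) f} :=
  range_eq_setOf_isIrrChar isIrrChar_diagramChar (diagramChar_injective Ω)
    (card_conjClasses_perm_le Ω)

lemma linearIndependent_int_diagramChar : LinearIndependent ℤ (diagramChar (Ω := Ω)) :=
  (linearIndependent_of_isIrrChar isIrrChar_diagramChar
    (diagramChar_injective Ω)).restrict_scalars' ℤ

variable {Ω}

lemma diagramChar_eq_spechtChar {μ : DiagramOfCard (Fintype.card Ω)} (T : Tableau Ω μ.1) :
    diagramChar μ = T.spechtChar := by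
  obtain ⟨ν, hν⟩ := (range_diagramChar Ω).superset T.isIrrChar_spechtChar
  obtain rfl : ν = μ := Subtype.ext (Tableau.shape_eq_of_spechtChar_eq hν)
  exact hν

/-- The character `Ind (χ^μ ⊠ χ^μ)`. -/
noncomputable def indSquareChar (μ : DiagramOfCard (Fintype.card Ω)) : Perm (Ω ⊕ Ω) → ℂ :=
  (tableauOfShape μ).indSquare

lemma range_indSquareChar :
    Set.range (indSquareChar (Ω := Ω)) =
      (fun χ : Perm Ω → ℂ => indHom (Perm.sumCongrHom Ω Ω) fun p => χ p.1 * χ p.2) ''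
        {f | IsIrrChar (Perm Ω) f} := by
  rw [← range_diagramChar, ← Set.range_comp]
  rfl

lemma indSquareChar_eq_sum (μ : DiagramOfCard (Fintype.card Ω)) :
    indSquareChar μ = ∑ ν, charPairing _ (indSquareChar μ) (diagramChar ν) • diagramChar ν := by
  refine eq_sum_charPairing_smul isIrrChar_diagramChar (diagramChar_injective _) ?_
  rw [span_range_diagramChar]
  exact indHom_mem_classFunctions _ _

lemma charPairing_indSquareChar_doubleDiagram (μ : DiagramOfCard (Fintype.card Ω)) :
    charPairing _ (indSquareChar μ) (diagramChar (doubleDiagram μ)) = 1 := by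
  rw [diagramChar_eq_spechtChar (μ := doubleDiagram μ) (tableauOfShape μ).double]
  exact (tableauOfShape μ).charPairing_indSquare_double

lemma eq_or_rowIndexSum_lt_of_charPairing_ne_zero {μ : DiagramOfCard (Fintype.card Ω)}
    {ν : DiagramOfCard (Fintype.card (Ω ⊕ Ω))}
    (h : charPairing _ (indSquareChar μ) (diagramChar ν) ≠ 0) :
    ν = doubleDiagram μ ∨ rowIndexSum (doubleDiagram μ).1 < rowIndexSum ν.1 :=
  ((tableauOfShape μ).doubleRows_eq_or_rowIndexSum_lt h).imp_left fun h' => Subtype.ext h'.symm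

lemma charPairing_smul_diagramChar_mem_span {μ : DiagramOfCard (Fintype.card Ω)}
    {ν : DiagramOfCard (Fintype.card (Ω ⊕ Ω))} (hν : ν ≠ doubleDiagram μ) :
    charPairing _ (indSquareChar μ) (diagramChar ν) • diagramChar ν ∈
      span ℤ (diagramChar '' {ν | rowIndexSum (doubleDiagram μ).1 < rowIndexSum ν.1}) := by
  by_cases h : charPairing _ (indSquareChar μ) (diagramChar ν) = 0
  · rw [h, zero_smul]
    exact zero_mem _
  · have hlt := (eq_or_rowIndexSum_lt_of_charPairing_ne_zero h).resolve_left hν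
    obtain ⟨n, hn⟩ : ∃ n : ℕ, charPairing _ (indSquareChar μ) (diagramChar ν) = n :=
      ⟨_, (tableauOfShape μ).charPairing_indSquare (tableauOfShape ν)⟩
    rw [hn, Nat.cast_smul_eq_nsmul]
    exact nsmul_mem (subset_span (Set.mem_image_of_mem diagramChar hlt)) n

lemma indSquareChar_sub_diagramChar_mem_span (μ : DiagramOfCard (Fintype.card Ω)) :
    indSquareChar μ - diagramChar (doubleDiagram μ) ∈
      span ℤ (diagramChar '' {ν | rowIndexSum (doubleDiagram μ).1 < rowIndexSum ν.1}) := by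
  have hsum := indSquareChar_eq_sum μ
  rw [← Finset.add_sum_erase _ _ (Finset.mem_univ (doubleDiagram μ)),
    charPairing_indSquareChar_doubleDiagram, one_smul, ← sub_eq_iff_eq_add'] at hsum
  rw [hsum]
  exact sum_mem fun ν hν => charPairing_smul_diagramChar_mem_span (Finset.ne_of_mem_erase hν)

variable (Ω) in
/-- The basis of the theorem: `Ind (χ^μ ⊠ χ^μ)` takes the place of `χ^(2μ)`, while the characters
labelled by a diagram with an odd row are kept. -/
noncomputable def basisChar : DiagramOfCard (Fintype.card (Ω ⊕ Ω)) → Perm (Ω ⊕ Ω) → ℂ :=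
  Function.extend doubleDiagram indSquareChar diagramChar

lemma basisChar_sub_diagramChar_mem_span (ν : DiagramOfCard (Fintype.card (Ω ⊕ Ω))) :
    basisChar Ω ν - diagramChar ν ∈
      span ℤ (diagramChar '' {ν' | rowIndexSum ν.1 < rowIndexSum ν'.1}) := by
  by_cases h : ∃ μ, doubleDiagram μ = ν
  · obtain ⟨μ, rfl⟩ := h
    rw [basisChar, (doubleDiagram_injective Ω).extend_apply]
    exact indSquareChar_sub_diagramChar_mem_span μ
  · rw [basisChar, Function.extend_apply' _ _ _ h, sub_self]
    exact zero_mem _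

end DiagramCharacters

/-- there is a set `S` of irreducible characters of `S_{2w}`, of cardinality
`p(2w) - p(w)`, such that the characters `Ind_{S_w × S_w}^{S_{2w}} (χ ⊠ χ)` for
`χ ∈ Irr(S_w)` together with `S` form a `ℤ`-basis of the group of virtual characters of
`S_{2w}` (the `ℤ`-span of the irreducible characters inside the class functions). -/
theorem ind_diag_extends_to_basis (w : ℕ) (hw : 0 < w) :
    ∃ S : Set (Equiv.Perm (Fin w ⊕ Fin w) → ℂ),
      S ⊆ {f | IsIrrChar (Equiv.Perm (Fin w ⊕ Fin w)) f} ∧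
      S.Finite ∧
      S.ncard = Fintype.card (Nat.Partition (2 * w)) - Fintype.card (Nat.Partition w) ∧
      LinearIndependent ℤ
        (fun v : (gammaSet w ∪ S : Set (Equiv.Perm (Fin w ⊕ Fin w) → ℂ)) =>
          (v : Equiv.Perm (Fin w ⊕ Fin w) → ℂ)) ∧
      Submodule.span ℤ (gammaSet w ∪ S) =
        Submodule.span ℤ {f | IsIrrChar (Equiv.Perm (Fin w ⊕ Fin w)) f} := by
  have hrange : gammaSet w ∪ diagramChar '' (Set.range doubleDiagram)ᶜ =
      Set.range (basisChar (Fin w)) := by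
    rw [basisChar, Set.range_extend (doubleDiagram_injective _), range_indSquareChar, gammaSet]
  refine ⟨diagramChar '' (Set.range doubleDiagram)ᶜ, ?_, Set.toFinite _, ?_, ?_, ?_⟩
  · rintro _ ⟨ν, -, rfl⟩
    exact isIrrChar_diagramChar ν
  · rw [Set.ncard_image_of_injective _ (diagramChar_injective _), Set.ncard_compl,
      Set.ncard_range_of_injective (doubleDiagram_injective _), Nat.card_eq_fintype_card,
      Nat.card_eq_fintype_card, card_diagramOfCard, card_diagramOfCard, Fintype.card_sum,
      Fintype.card_fin, two_mul]
  · rw [hrange]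
    exact (linearIndependent_of_unitriangular (linearIndependent_int_diagramChar _)
      basisChar_sub_diagramChar_mem_span).linearIndepOn_id
  · rw [hrange, ← range_diagramChar,
      span_range_eq_of_unitriangular basisChar_sub_diagramChar_mem_span]
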